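/- Suppose S_n(t), S̄_n(t) ∈ ℂ^N and v_n(t) ∈ ℂ (n ∈ ℤ, t ∈ ℝ, differentiable in t) satisfy the discrete multicomponent Yajima–Oikawa system (dgvYO) with constant c ∈ ℂ. Then for all n and t the third conservation law holds: d/dt [ v_n v_{n+1} + (i/2) v_{n+1} (⟨S_{n+2}, S̄_n⟩ − ⟨S_n, S̄_{n+2}⟩) − (1/8) (⟨S_{n+1}, S̄_n⟩ + ⟨S_n, S̄_{n+1}⟩)² ] = Δ⁺[ (1/2) v_n v_{n+1} (⟨S_{n+2}, S̄_{n−1}⟩ + ⟨S_{n−1}, S̄_{n+2}⟩ + ⟨S_n, S̄_{n−1}⟩ + ⟨S_{n−1}, S̄_n⟩) + (i/4) v_n (⟨S_{n+1}, S̄_n⟩ + ⟨S_n, S̄_{n+1}⟩)(⟨S_{n+1}, S̄_{n−1}⟩ − ⟨S_{n−1}, S̄_{n+1}⟩) ]. -/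

import Mathlib

open Complex BigOperators

/-- Bilinear pairing on `ℂ^N` (no complex conjugation). -/
noncomputable def pair {N : ℕ} (a b : Fin N → ℂ) : ℂ := ∑ k, a k * b k

/-
The constant `c` cancels from the evolution of every pairing `⟨S_a, S̄_b⟩`, so the conserved density
obeys a closed system. Put `σ_{a,b} = ⟨S_a, S̄_b⟩ + ⟨S_b, S̄_a⟩` and
`α_{a,b} = ⟨S_a, S̄_b⟩ - ⟨S_b, S̄_a⟩`; time evolution exchanges the two families:
`i σ_{a,b}' = v_a (α_{a+1,b} + α_{a-1,b}) - v_b (α_{a,b+1} + α_{a,b-1})`, and likewise with `σ` and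
`α` interchanged. As `α_{n,n} = 0`, the derivative of `σ_{n+1,n}` involves only `α_{n+2,n}` and
`α_{n+1,n-1}`; the terms of `v_n v_{n+1} + (i/2) v_{n+1} α_{n+2,n} - (1/8) σ_{n+1,n}²` are weighted
so that all non-telescoping contributions to its time derivative cancel.
-/

section BilinearPairing

variable {E F : Type*} [NormedAddCommGroup E] [NormedSpace ℂ E]
  [NormedAddCommGroup F] [NormedSpace ℂ F]

/-- The symmetric part `⟨S_a, S̄_b⟩ + ⟨S_b, S̄_a⟩` of the lattice pairing (without a factor `1/2`),
with `⟨·, ·⟩` an arbitrary continuous bilinear form `B`. -/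
noncomputable def symmPairing (B : E →L[ℂ] F →L[ℂ] ℂ) (S : ℤ → ℝ → E) (Sb : ℤ → ℝ → F)
    (a b : ℤ) (t : ℝ) : ℂ :=
  B (S a t) (Sb b t) + B (S b t) (Sb a t)

/-- The antisymmetric part `⟨S_a, S̄_b⟩ - ⟨S_b, S̄_a⟩` of the lattice pairing (without a factor
`1/2`). -/
noncomputable def skewPairing (B : E →L[ℂ] F →L[ℂ] ℂ) (S : ℤ → ℝ → E) (Sb : ℤ → ℝ → F)
    (a b : ℤ) (t : ℝ) : ℂ :=
  B (S a t) (Sb b t) - B (S b t) (Sb a t)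

/-- The density at site `n` of the third conservation law of the Yajima–Oikawa lattice. -/
noncomputable def thirdDensity (B : E →L[ℂ] F →L[ℂ] ℂ) (S : ℤ → ℝ → E) (Sb : ℤ → ℝ → F)
    (v : ℤ → ℝ → ℂ) (n : ℤ) (t : ℝ) : ℂ :=
  v n t * v (n + 1) t + (I / 2) * v (n + 1) t * skewPairing B S Sb (n + 2) n t
    - (1 / 8) * symmPairing B S Sb (n + 1) n t ^ 2

/-- The flux of the third conservation law of the Yajima–Oikawa lattice, with the sign convention
that the time derivative of the density is the forward difference of the flux. -/
noncomputable def thirdFlux (B : E →L[ℂ] F →L[ℂ] ℂ) (S : ℤ → ℝ → E) (Sb : ℤ → ℝ → F)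
    (v : ℤ → ℝ → ℂ) (n : ℤ) (t : ℝ) : ℂ :=
  (1 / 2) * v n t * v (n + 1) t *
      (symmPairing B S Sb (n + 2) (n - 1) t + symmPairing B S Sb n (n - 1) t)
    + (I / 4) * v n t * symmPairing B S Sb (n + 1) n t * skewPairing B S Sb (n + 1) (n - 1) t

/-- Solutions of the multicomponent Yajima–Oikawa lattice whose components `S_n`, `S̄_n` take values
in complex normed spaces paired by `B`. The coefficient `c` may depend on time. -/
structure IsYajimaOikawa (B : E →L[ℂ] F →L[ℂ] ℂ) (c : ℝ → ℂ)
    (S : ℤ → ℝ → E) (Sb : ℤ → ℝ → F) (v : ℤ → ℝ → ℂ) : Prop where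
  differentiable_left (n : ℤ) : Differentiable ℝ (S n)
  differentiable_right (n : ℤ) : Differentiable ℝ (Sb n)
  differentiable_field (n : ℤ) : Differentiable ℝ (v n)
  I_smul_deriv_left (n : ℤ) (t : ℝ) :
    I • deriv (S n) t = v n t • (S (n + 1) t + S (n - 1) t) - c t • S n t
  I_smul_deriv_right (n : ℤ) (t : ℝ) :
    I • deriv (Sb n) t = -(v n t • (Sb (n + 1) t + Sb (n - 1) t)) + c t • Sb n t
  deriv_field (n : ℤ) (t : ℝ) :
    deriv (v n) t = (1 / 2) * v n t *
      ((B (S (n + 1) t) (Sb n t) + B (S n t) (Sb (n + 1) t))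
        - (B (S n t) (Sb (n - 1) t) + B (S (n - 1) t) (Sb n t)))

theorem skewPairing_self (B : E →L[ℂ] F →L[ℂ] ℂ) (S : ℤ → ℝ → E) (Sb : ℤ → ℝ → F) (a : ℤ) (t : ℝ) :
    skewPairing B S Sb a a t = 0 :=
  sub_self _

namespace IsYajimaOikawa

variable {B : E →L[ℂ] F →L[ℂ] ℂ} {c : ℝ → ℂ} {S : ℤ → ℝ → E} {Sb : ℤ → ℝ → F}
  {v : ℤ → ℝ → ℂ}

theorem hasDerivAt_field (h : IsYajimaOikawa B c S Sb v) (n : ℤ) (t : ℝ) :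
    HasDerivAt (v n)
      ((1 / 2) * v n t * (symmPairing B S Sb (n + 1) n t - symmPairing B S Sb n (n - 1) t)) t :=
  h.deriv_field n t ▸ (h.differentiable_field n t).hasDerivAt

theorem hasDerivAt_pairing (h : IsYajimaOikawa B c S Sb v) (a b : ℤ) (t : ℝ) :
    HasDerivAt (fun s => B (S a s) (Sb b s))
      (-I * (v a t * (B (S (a + 1) t) (Sb b t) + B (S (a - 1) t) (Sb b t))
        - v b t * (B (S a t) (Sb (b + 1) t) + B (S a t) (Sb (b - 1) t)))) t := by
  have leibniz : HasDerivAt (fun s => B (S a s) (Sb b s))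
      (B (S a t) (deriv (Sb b) t) + B (deriv (S a) t) (Sb b t)) t :=
    (B.bilinearRestrictScalars ℝ).hasDerivAt_of_bilinear
      (fun _ => (h.differentiable_left a t).hasDerivAt)
      (fun _ => (h.differentiable_right b t).hasDerivAt)
  have left := congrArg (fun x => B x (Sb b t)) (h.I_smul_deriv_left a t)
  have right := congrArg (B (S a t)) (h.I_smul_deriv_right b t)
  simp only [map_add, map_sub, map_neg, map_smul, add_apply, sub_apply, smul_apply,
    smul_eq_mul] at left right
  refine leibniz.congr_deriv ?_
  linear_combination (-I) * (left + right)
    + (B (S a t) (deriv (Sb b) t) + B (deriv (S a) t) (Sb b t)) * I_sq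

theorem hasDerivAt_symmPairing (h : IsYajimaOikawa B c S Sb v) (a b : ℤ) (t : ℝ) :
    HasDerivAt (symmPairing B S Sb a b)
      (-I * (v a t * (skewPairing B S Sb (a + 1) b t + skewPairing B S Sb (a - 1) b t)
        - v b t * (skewPairing B S Sb a (b + 1) t + skewPairing B S Sb a (b - 1) t))) t := by
  refine ((h.hasDerivAt_pairing a b t).fun_add (h.hasDerivAt_pairing b a t)).congr_deriv ?_
  simp only [skewPairing]
  ring

theorem hasDerivAt_skewPairing (h : IsYajimaOikawa B c S Sb v) (a b : ℤ) (t : ℝ) :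
    HasDerivAt (skewPairing B S Sb a b)
      (-I * (v a t * (symmPairing B S Sb (a + 1) b t + symmPairing B S Sb (a - 1) b t)
        - v b t * (symmPairing B S Sb a (b + 1) t + symmPairing B S Sb a (b - 1) t))) t := by
  refine ((h.hasDerivAt_pairing a b t).fun_sub (h.hasDerivAt_pairing b a t)).congr_deriv ?_
  simp only [symmPairing]
  ring

theorem hasDerivAt_field_mul_field_succ (h : IsYajimaOikawa B c S Sb v) (n : ℤ) (t : ℝ) :
    HasDerivAt (fun s => v n s * v (n + 1) s)
      ((1 / 2) * v n t * v (n + 1) t *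
        (symmPairing B S Sb (n + 2) (n + 1) t - symmPairing B S Sb n (n - 1) t)) t := by
  refine ((h.hasDerivAt_field n t).fun_mul (h.hasDerivAt_field (n + 1) t)).congr_deriv ?_
  rw [add_sub_cancel_right, show n + 1 + 1 = n + 2 by ring]
  ring

theorem hasDerivAt_symmPairing_succ (h : IsYajimaOikawa B c S Sb v) (n : ℤ) (t : ℝ) :
    HasDerivAt (symmPairing B S Sb (n + 1) n)
      (-I * (v (n + 1) t * skewPairing B S Sb (n + 2) n t
        - v n t * skewPairing B S Sb (n + 1) (n - 1) t)) t := by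
  refine (h.hasDerivAt_symmPairing (n + 1) n t).congr_deriv ?_
  rw [add_sub_cancel_right, show n + 1 + 1 = n + 2 by ring, skewPairing_self, skewPairing_self,
    add_zero, zero_add]

theorem hasDerivAt_skewPairing_add_two (h : IsYajimaOikawa B c S Sb v) (n : ℤ) (t : ℝ) :
    HasDerivAt (skewPairing B S Sb (n + 2) n)
      (-I * (v (n + 2) t * (symmPairing B S Sb (n + 3) n t + symmPairing B S Sb (n + 1) n t)
        - v n t * (symmPairing B S Sb (n + 2) (n + 1) t
          + symmPairing B S Sb (n + 2) (n - 1) t))) t := by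
  refine (h.hasDerivAt_skewPairing (n + 2) n t).congr_deriv ?_
  rw [show n + 2 + 1 = n + 3 by ring, show n + 2 - 1 = n + 1 by ring]

theorem hasDerivAt_I_div_two_mul_field_mul_skewPairing (h : IsYajimaOikawa B c S Sb v) (n : ℤ)
    (t : ℝ) :
    HasDerivAt (fun s => (I / 2) * v (n + 1) s * skewPairing B S Sb (n + 2) n s)
      ((I / 4) * v (n + 1) t *
          (symmPairing B S Sb (n + 2) (n + 1) t - symmPairing B S Sb (n + 1) n t)
          * skewPairing B S Sb (n + 2) n t
        + (1 / 2) * v (n + 1) t *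
          (v (n + 2) t * (symmPairing B S Sb (n + 3) n t + symmPairing B S Sb (n + 1) n t)
            - v n t * (symmPairing B S Sb (n + 2) (n + 1) t
              + symmPairing B S Sb (n + 2) (n - 1) t))) t := by
  refine (((h.hasDerivAt_field (n + 1) t).const_mul (I / 2)).fun_mul
    (h.hasDerivAt_skewPairing_add_two n t)).congr_deriv ?_
  rw [add_sub_cancel_right, show n + 1 + 1 = n + 2 by ring]
  linear_combination (-(1 / 2) * v (n + 1) t *
    (v (n + 2) t * (symmPairing B S Sb (n + 3) n t + symmPairing B S Sb (n + 1) n t)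
      - v n t * (symmPairing B S Sb (n + 2) (n + 1) t
        + symmPairing B S Sb (n + 2) (n - 1) t))) * I_sq

theorem hasDerivAt_symmPairing_succ_sq (h : IsYajimaOikawa B c S Sb v) (n : ℤ) (t : ℝ) :
    HasDerivAt (fun s => symmPairing B S Sb (n + 1) n s ^ 2)
      (-2 * I * symmPairing B S Sb (n + 1) n t *
        (v (n + 1) t * skewPairing B S Sb (n + 2) n t
          - v n t * skewPairing B S Sb (n + 1) (n - 1) t)) t := by
  refine ((h.hasDerivAt_symmPairing_succ n t).fun_pow 2).congr_deriv ?_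
  push_cast
  ring

end IsYajimaOikawa

theorem thirdFlux_succ (B : E →L[ℂ] F →L[ℂ] ℂ) (S : ℤ → ℝ → E) (Sb : ℤ → ℝ → F) (v : ℤ → ℝ → ℂ)
    (n : ℤ) (t : ℝ) :
    thirdFlux B S Sb v (n + 1) t =
      (1 / 2) * v (n + 1) t * v (n + 2) t *
          (symmPairing B S Sb (n + 3) n t + symmPairing B S Sb (n + 1) n t)
        + (I / 4) * v (n + 1) t * symmPairing B S Sb (n + 2) (n + 1) t
          * skewPairing B S Sb (n + 2) n t := by
  rw [thirdFlux, add_sub_cancel_right, show n + 1 + 1 = n + 2 by ring,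
    show n + 1 + 2 = n + 3 by ring]

theorem stmt10_general {B : E →L[ℂ] F →L[ℂ] ℂ} {c : ℝ → ℂ} {S : ℤ → ℝ → E} {Sb : ℤ → ℝ → F}
    {v : ℤ → ℝ → ℂ} (h : IsYajimaOikawa B c S Sb v) (n : ℤ) (t : ℝ) :
    HasDerivAt (thirdDensity B S Sb v n)
      (thirdFlux B S Sb v (n + 1) t - thirdFlux B S Sb v n t) t := by
  refine (((h.hasDerivAt_field_mul_field_succ n t).fun_add
    (h.hasDerivAt_I_div_two_mul_field_mul_skewPairing n t)).fun_sub
      ((h.hasDerivAt_symmPairing_succ_sq n t).const_mul (1 / 8))).congr_deriv ?_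
  rw [thirdFlux_succ, thirdFlux]
  ring

end BilinearPairing

/-- The pairing of `ℂ^N` as a continuous bilinear map; it unfolds to `pair`. -/
noncomputable def pairCLM (N : ℕ) : (Fin N → ℂ) →L[ℂ] (Fin N → ℂ) →L[ℂ] ℂ :=
  (dotProductBilin ℂ ℂ).toContinuousBilinearMap

theorem pairCLM_apply {N : ℕ} (a b : Fin N → ℂ) : pairCLM N a b = pair a b :=
  rfl

theorem stmt10 {N : ℕ} (hN : 1 ≤ N)
    (S Sb : ℤ → ℝ → Fin N → ℂ) (v : ℤ → ℝ → ℂ) (c : ℂ)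
    (hSd : ∀ n, Differentiable ℝ (S n)) (hSbd : ∀ n, Differentiable ℝ (Sb n))
    (hvd : ∀ n, Differentiable ℝ (v n))
    (h1 : ∀ (n : ℤ) (t : ℝ),
      Complex.I • deriv (S n) t = (v n t) • (S (n+1) t + S (n-1) t) - c • S n t)
    (h2 : ∀ (n : ℤ) (t : ℝ),
      Complex.I • deriv (Sb n) t = -((v n t) • (Sb (n+1) t + Sb (n-1) t)) + c • Sb n t)
    (h3 : ∀ (n : ℤ) (t : ℝ), deriv (v n) t = (1/2) * v n t *
      ((pair (S (n+1) t) (Sb n t) + pair (S n t) (Sb (n+1) t))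
        - (pair (S n t) (Sb (n-1) t) + pair (S (n-1) t) (Sb n t)))) :
    ∀ (n : ℤ) (t : ℝ),
      deriv (fun s =>
        v n s * v (n+1) s
        + (Complex.I/2) * v (n+1) s * (pair (S (n+2) s) (Sb n s) - pair (S n s) (Sb (n+2) s))
        - (1/8) * (pair (S (n+1) s) (Sb n s) + pair (S n s) (Sb (n+1) s))^2) t
      = ((1/2) * v (n+1) t * v (n+2) t *
            (pair (S (n+3) t) (Sb n t) + pair (S n t) (Sb (n+3) t)
              + pair (S (n+1) t) (Sb n t) + pair (S n t) (Sb (n+1) t))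
          + (Complex.I/4) * v (n+1) t *
            (pair (S (n+2) t) (Sb (n+1) t) + pair (S (n+1) t) (Sb (n+2) t)) *
            (pair (S (n+2) t) (Sb n t) - pair (S n t) (Sb (n+2) t)))
        - ((1/2) * v n t * v (n+1) t *
            (pair (S (n+2) t) (Sb (n-1) t) + pair (S (n-1) t) (Sb (n+2) t)
              + pair (S n t) (Sb (n-1) t) + pair (S (n-1) t) (Sb n t))
          + (Complex.I/4) * v n t *
            (pair (S (n+1) t) (Sb n t) + pair (S n t) (Sb (n+1) t)) *
            (pair (S (n+1) t) (Sb (n-1) t) - pair (S (n-1) t) (Sb (n+1) t))) := by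
  have h : IsYajimaOikawa (pairCLM N) (fun _ => c) S Sb v := ⟨hSd, hSbd, hvd, h1, h2, h3⟩
  exact fun n t => (stmt10_general h n t).deriv.trans <| by
    rw [thirdFlux_succ]
    simp only [thirdFlux, symmPairing, skewPairing, pairCLM_apply, add_assoc]
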